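/- Let N ≥ 3, let V satisfy condition (V) and the decay condition that there exist A, α > 0 with V⁺(x) ≤ A|x|^{-2-α} for all x ∈ ℝ^N, let f satisfy conditions (f1), (f2), (f3), let λ > 0, and let u and v be two solutions of problem (P_λ). Then the boundary flux integral tends to zero: lim_{R→∞} ∫_{∂B_R} u(x) ∂v/∂ν(x) dσ(x) = 0, where ∂B_R is the sphere {|x| = R}, dσ is its surface measure, and ∂v/∂ν(x) = ⟨∇v(x), x/|x|⟩ is the outward normal derivative. -/

import Mathlib

open MeasureTheory Filter Metric Set
open scoped ENNReal NNReal Topology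

noncomputable section

/-- Euclidean space `ℝ^N`. -/
abbrev Euc (N : ℕ) := EuclideanSpace ℝ (Fin N)

/-- The Laplace operator on `ℝ^N`: the sum of the second partial derivatives. -/
def lap (N : ℕ) (u : Euc N → ℝ) (x : Euc N) : ℝ :=
  ∑ i : Fin N,
    fderiv ℝ (fun y => fderiv ℝ u y (EuclideanSpace.single i 1)) x (EuclideanSpace.single i 1)

/-- The principal eigenvalue `λ₁(R)`: the infimum of `∫_{B_R} |∇u|²` over smooth functions
compactly supported in the open ball `B_R` with `∫_{B_R} V u² = 1`. -/
def lam1 (N : ℕ) (V : Euc N → ℝ) (R : ℝ) : ℝ :=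
  sInf { t : ℝ | ∃ u : Euc N → ℝ, ContDiff ℝ (⊤ : ℕ∞) u ∧ HasCompactSupport u ∧
    tsupport u ⊆ ball (0 : Euc N) R ∧
    (∫ x, V x * u x ^ 2) = 1 ∧ t = ∫ x, ‖gradient u x‖ ^ 2 }

/-- `Λ := lim_{R → ∞} λ₁(R)`. -/
def Lam (N : ℕ) (V : Euc N → ℝ) : ℝ := limUnder atTop (lam1 N V)

/-- Condition (V): `V` is a bounded Hölder-continuous function whose positive part
`V⁺ = max(V, 0)` is nontrivial and decomposes as `V₁ + V₂` with `V₁ ∈ L^{N/2}` and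
`|x|² V₂(x) → 0` as `|x| → ∞`. -/
def CondV (N : ℕ) (V V₁ V₂ : Euc N → ℝ) : Prop :=
  (∃ C β : ℝ≥0, 0 < β ∧ β ≤ 1 ∧ HolderWith C β V) ∧
  (∃ C : ℝ, ∀ x, |V x| ≤ C) ∧
  (∃ x, 0 < V x) ∧
  (∀ x, max (V x) 0 = V₁ x + V₂ x) ∧
  MemLp V₁ ((N : ℝ≥0∞) / 2) volume ∧
  Tendsto (fun x : Euc N => ‖x‖ ^ 2 * V₂ x) (cocompact _) (𝓝 0)

/-- The decay condition: `V⁺(x) ≤ A |x|^{-2-α}`. -/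
def CondVDecay (N : ℕ) (V : Euc N → ℝ) : Prop :=
  ∃ A α : ℝ, 0 < A ∧ 0 < α ∧
    ∀ x : Euc N, x ≠ 0 → max (V x) 0 ≤ A * ‖x‖ ^ (-2 - α)

/-- Conditions (f1), (f2), (f3) on the absorption term `f`. -/
def CondF (N : ℕ) (V : Euc N → ℝ) (f : ℝ → ℝ) : Prop :=
  ContDiff ℝ 1 f ∧ (∀ u : ℝ, 0 ≤ u → 0 ≤ f u) ∧
  -- (f1)
  f 0 = 0 ∧ deriv f 0 = 0 ∧
  0 < Filter.liminf (fun u : ℝ => ((deriv f u / u : ℝ) : EReal)) (𝓝[>] (0 : ℝ)) ∧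
  -- (f2)
  StrictMonoOn (fun u : ℝ => f u / u) (Ioi 0) ∧
  -- (f3)
  (∃ L : EReal, Tendsto (fun u : ℝ => ((f u / u : ℝ) : EReal)) atTop (𝓝 L) ∧
    ((⨆ x, |V x| : ℝ) : EReal) < L)

/-- A solution of problem `(P_λ)`: a positive `C²` function solving the logistic equation
and decaying to zero at infinity. -/
structure IsSolution (N : ℕ) (V : Euc N → ℝ) (f : ℝ → ℝ) (lam : ℝ) (u : Euc N → ℝ) : Prop where
  smooth : ContDiff ℝ 2 u
  pos : ∀ x, 0 < u x
  eqn : ∀ x, -lap N u x = lam * (V x * u x - f (u x))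
  decay : Tendsto u (cocompact (Euc N)) (𝓝 0)

/-- The surface integral `∫_{∂B_R} g dσ` over the sphere of radius `R`, written in polar
coordinates with respect to the canonical surface measure on the unit sphere. -/
def sphereInt (N : ℕ) (g : Euc N → ℝ) (R : ℝ) : ℝ :=
  ∫ ω : sphere (0 : Euc N) 1, g (R • (ω : Euc N)) * R ^ (N - 1)
    ∂((volume : Measure (Euc N)).toSphere)


/-- `k` has second derivative `d` at `x` in the direction `e`. -/
def HasSec {N : ℕ} (k : Euc N → ℝ) (x e : Euc N) (d : ℝ) : Prop :=
  ∃ k' : ℝ → ℝ, (∀ᶠ τ in 𝓝 (0:ℝ), HasDerivAt (fun τ : ℝ => k (x + τ • e)) (k' τ) τ) ∧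
    HasDerivAt k' d 0

lemma HasSec.add {N : ℕ} {k l : Euc N → ℝ} {x e : Euc N} {d d' : ℝ}
    (h : HasSec k x e d) (h' : HasSec l x e d') : HasSec (fun y => k y + l y) x e (d + d') := by
  obtain ⟨k', h1, h2⟩ := h
  obtain ⟨l', h3, h4⟩ := h'
  refine ⟨fun τ => k' τ + l' τ, ?_, h2.add h4⟩
  filter_upwards [h1, h3] with τ a b using a.add b

lemma HasSec.const_mul {N : ℕ} {k : Euc N → ℝ} {x e : Euc N} {d : ℝ} (c : ℝ)
    (h : HasSec k x e d) : HasSec (fun y => c * k y) x e (c * d) := by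
  obtain ⟨k', h1, h2⟩ := h
  refine ⟨fun τ => c * k' τ, ?_, h2.const_mul c⟩
  filter_upwards [h1] with τ a using a.const_mul c

lemma HasSec.const {N : ℕ} {x e : Euc N} (c : ℝ) : HasSec (fun _ => c) x e 0 :=
  ⟨fun _ => 0, Eventually.of_forall fun _ => hasDerivAt_const _ _, hasDerivAt_const _ _⟩

lemma HasSec.nonpos {N : ℕ} {k : Euc N → ℝ} {x e : Euc N} {d : ℝ}
    (h : HasSec k x e d) (hm : IsLocalMax k x) : d ≤ 0 := by
  obtain ⟨k', h1, h2⟩ := h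
  by_contra hd
  push Not at hd
  set g : ℝ → ℝ := fun τ => k (x + τ • e) with hg
  have hcont : ContinuousAt (fun τ : ℝ => x + τ • e) 0 := by fun_prop
  have hmax : IsLocalMax g 0 := by
    have : Tendsto (fun τ : ℝ => x + τ • e) (𝓝 0) (𝓝 x) := by
      have := hcont.tendsto
      simpa using this
    have h3 := this.eventually hm
    simpa [IsLocalMax, IsMaxFilter, hg] using h3
  have hder : deriv g =ᶠ[𝓝 0] k' := h1.mono fun τ hτ => hτ.deriv
  have hdd : deriv (deriv g) 0 = d := by rw [hder.deriv_eq]; exact h2.deriv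
  have hmin := isLocalMin_of_deriv_deriv_pos (f := g) (x₀ := 0) (by rw [hdd]; exact hd)
    hmax.deriv_eq_zero h1.self_of_nhds.continuousAt
  have heq : g =ᶠ[𝓝 0] fun _ => g 0 := by
    filter_upwards [hmax, hmin] with τ a b using le_antisymm a b
  have h5 : deriv g =ᶠ[𝓝 0] fun _ => 0 := by
    have := heq.deriv
    simpa using this
  have h6 : deriv (deriv g) 0 = 0 := by rw [h5.deriv_eq]; simp
  linarith

lemma hasSec_of_contDiff {N : ℕ} {u : Euc N → ℝ} (hu : ContDiff ℝ 2 u) (x e : Euc N) :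
    HasSec u x e (fderiv ℝ (fun y => fderiv ℝ u y e) x e) := by
  have hl : ∀ τ : ℝ, HasDerivAt (fun τ : ℝ => x + τ • e) e τ := by
    intro τ
    simpa using ((hasDerivAt_id τ).smul_const e).const_add x
  refine ⟨fun τ => fderiv ℝ u (x + τ • e) e, Eventually.of_forall fun τ => ?_, ?_⟩
  · exact (hu.differentiable (by norm_num) _).hasFDerivAt.comp_hasDerivAt τ (hl τ)
  · have h1 : ContDiff ℝ 1 (fun y => fderiv ℝ u y e) :=
      (hu.fderiv_right (m := 1) (by norm_num)).clm_apply contDiff_const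
    have h2 := (h1.differentiable (by norm_num) (x + (0:ℝ) • e)).hasFDerivAt.comp_hasDerivAt 0 (hl 0)
    simpa [Function.comp_def] using h2

lemma hasSec_pow {N : ℕ} (s : ℝ) {x : Euc N} (hx : x ≠ 0) (i : Fin N) :
    HasSec (fun y : Euc N => ‖y‖ ^ (-s)) x (EuclideanSpace.single i 1)
      (-s * ((-s - 2) * ‖x‖ ^ (-s - 4) * (x i) ^ 2 + ‖x‖ ^ (-s - 2))) := by
  have hx0 : 0 < ‖x‖ := norm_pos_iff.mpr hx
  set q : ℝ → ℝ := fun τ => ‖x‖ ^ 2 + 2 * τ * x i + τ ^ 2 with hq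
  have hq0 : 0 < q 0 := by simp [hq]; positivity
  have hqn : ∀ τ : ℝ, ‖x + τ • EuclideanSpace.single i (1:ℝ)‖ ^ 2 = q τ := by
    intro τ
    rw [norm_add_sq_real, inner_smul_right, norm_smul]
    simp [hq, EuclideanSpace.inner_single_right]
    ring
  have hqd : ∀ τ, HasDerivAt q (2 * x i + 2 * τ) τ := by
    intro τ
    have := (((hasDerivAt_id τ).const_mul 2).mul_const (x i)).const_add (‖x‖ ^ 2) |>.add
      ((hasDerivAt_id τ).pow 2)
    refine this.congr_deriv ?_
    simp
  have hqc : Continuous q := by fun_prop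
  have hev : ∀ᶠ τ in 𝓝 (0:ℝ), 0 < q τ := hqc.continuousAt.eventually (lt_mem_nhds hq0)
  have hfun : (fun τ : ℝ => ‖x + τ • EuclideanSpace.single i (1:ℝ)‖ ^ (-s))
      = fun τ => (q τ) ^ (-s/2) := by
    funext τ
    rw [← hqn, ← Real.rpow_natCast, ← Real.rpow_mul (norm_nonneg _)]
    congr 1; push_cast; ring
  refine ⟨fun τ => (2 * x i + 2 * τ) * (-s/2) * (q τ) ^ (-s/2 - 1), ?_, ?_⟩
  · rw [hfun]
    filter_upwards [hev] with τ hτ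
    exact (hqd τ).rpow_const (Or.inl hτ.ne')
  · have h1 : HasDerivAt (fun τ : ℝ => (2 * x i + 2 * τ) * (-s/2)) (2 * 1 * (-s/2)) 0 :=
      (((hasDerivAt_id (0:ℝ)).const_mul 2).const_add (2 * x i)).mul_const (-s/2)
    have h2 := (hqd 0).rpow_const (p := -s/2 - 1) (Or.inl hq0.ne')
    have h3 := h1.mul h2
    have hp : ∀ p : ℝ, q 0 ^ p = ‖x‖ ^ (2 * p) := by
      intro p
      have : q 0 = ‖x‖ ^ (2:ℝ) := by simp [hq]
      rw [this, ← Real.rpow_mul hx0.le]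
    refine h3.congr_deriv ?_
    simp only [hp]
    rw [show 2 * (-s / 2 - 1) = -s - 2 by ring, show 2 * (-s / 2 - 1 - 1) = -s - 4 by ring]
    ring

lemma sum_sec_pow {N : ℕ} (s : ℝ) {x : Euc N} (hx : x ≠ 0) :
    ∑ i : Fin N, (-s * ((-s - 2) * ‖x‖ ^ (-s - 4) * (x i) ^ 2 + ‖x‖ ^ (-s - 2)))
      = - (s * (N - 2 - s) * ‖x‖ ^ (-s - 2)) := by
  have hx0 : 0 < ‖x‖ := norm_pos_iff.mpr hx
  have h1 : ∑ i : Fin N, (x i) ^ 2 = ‖x‖ ^ 2 := by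
    rw [EuclideanSpace.norm_sq_eq]; simp
  have h2 : ‖x‖ ^ (-s - 4) * ‖x‖ ^ 2 = ‖x‖ ^ (-s - 2) := by
    rw [← Real.rpow_natCast, ← Real.rpow_add hx0]; congr 1; push_cast; ring
  rw [← Finset.mul_sum, Finset.sum_add_distrib, ← Finset.mul_sum, h1, mul_assoc, h2]
  simp
  ring

/-- Decay of solutions: `u ≤ C |x|^{-s}` with `s = (N-2)/2`. -/
lemma decay_bound {N : ℕ} (hN : 3 ≤ N) {V : Euc N → ℝ} {f : ℝ → ℝ} {lam : ℝ}
    (hdec : CondVDecay N V) (hfn : ∀ u : ℝ, 0 ≤ u → 0 ≤ f u) (hlam : 0 < lam)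
    {u : Euc N → ℝ} (hu : IsSolution N V f lam u) :
    ∃ C R0 : ℝ, 0 < C ∧ 1 ≤ R0 ∧ ∀ x : Euc N, R0 ≤ ‖x‖ →
      u x ≤ C * ‖x‖ ^ (-(((N:ℝ) - 2) / 2)) := by
  obtain ⟨A, α, hA, hα, hV⟩ := hdec
  have hN' : (3:ℝ) ≤ N := by exact_mod_cast hN
  set s : ℝ := ((N:ℝ) - 2) / 2 with hs
  have hs0 : 0 < s := by simp only [hs]; linarith
  set t : ℝ := min (α / 2) s with ht
  have ht0 : 0 < t := lt_min (by positivity) hs0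
  have hts : t ≤ s := min_le_right _ _
  have htα : t < α := (min_le_left _ _).trans_lt (by linarith)
  have e1 : ∀ᶠ r : ℝ in atTop, lam * A * r ^ (-α) < s * (N - 2 - s) := by
    have : Tendsto (fun r : ℝ => lam * A * r ^ (-α)) atTop (𝓝 (lam * A * 0)) :=
      (tendsto_rpow_neg_atTop hα).const_mul _
    rw [mul_zero] at this
    exact this.eventually (gt_mem_nhds (by have : (N:ℝ) - 2 - s = s := by simp only [hs]; ring
                                           rw [this]; positivity))
  have e2 : ∀ᶠ r : ℝ in atTop, 2 * lam * A * r ^ (-(α - t)) < t * (N - 2 - t) := by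
    have : Tendsto (fun r : ℝ => 2 * lam * A * r ^ (-(α - t))) atTop (𝓝 (2 * lam * A * 0)) :=
      (tendsto_rpow_neg_atTop (by linarith)).const_mul _
    rw [mul_zero] at this
    refine this.eventually (gt_mem_nhds (mul_pos ht0 ?_))
    simp only [hs] at hts hs0; linarith
  obtain ⟨R0, hR0⟩ := ((e1.and e2).and (eventually_ge_atTop (1:ℝ))).exists_forall_of_atTop
  have hR1 : 1 ≤ R0 := (hR0 R0 le_rfl).2
  have hucont : Continuous u := hu.smooth.continuous
  obtain ⟨M, hM⟩ := (isCompact_sphere (0 : Euc N) R0).bddAbove_image hucont.continuousOn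
  have hMle : ∀ x : Euc N, ‖x‖ = R0 → u x ≤ M := fun x hx =>
    hM ⟨x, by simpa using hx, rfl⟩
  set C : ℝ := (|M| + 1) * R0 ^ s with hC
  have hR00 : 0 < R0 := by linarith
  have hC0 : 0 < C := by positivity
  refine ⟨C, R0, hC0, hR1, ?_⟩
  have key : ∀ ε : ℝ, 0 < ε → ∀ x : Euc N, R0 ≤ ‖x‖ →
      u x ≤ C * ‖x‖ ^ (-s) + ε * (1 + ‖x‖ ^ (-t)) := by
    intro ε hε
    set φ : Euc N → ℝ := fun x => C * ‖x‖ ^ (-s) + ε * (1 + ‖x‖ ^ (-t)) with hφ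
    have hφε : ∀ x, ε ≤ φ x := by
      intro x
      have h1 : 0 ≤ ‖x‖ ^ (-s) := by positivity
      have h2 : 0 ≤ ‖x‖ ^ (-t) := by positivity
      simp only [hφ]; nlinarith
    have hφ0 : ∀ x, 0 < φ x := fun x => hε.trans_le (hφε x)
    by_contra hcon
    push Not at hcon
    obtain ⟨x1, hx1, hx1'⟩ := hcon
    obtain ⟨R2, hR2⟩ : ∃ R2 : ℝ, ∀ x : Euc N, R2 ≤ ‖x‖ → u x < ε := by
      have h1 := hu.decay.eventually (gt_mem_nhds hε)
      rw [← Metric.cobounded_eq_cocompact, ← comap_norm_atTop, eventually_comap] at h1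
      obtain ⟨R2, h2⟩ := h1.exists_forall_of_atTop
      exact ⟨R2, fun x hx => h2 _ hx x rfl⟩
    set K : Set (Euc N) := {x | R0 ≤ ‖x‖} ∩ closedBall 0 (max R2 ‖x1‖) with hK
    have hKc : IsCompact K :=
      (isCompact_closedBall _ _).inter_left (isClosed_le continuous_const continuous_norm)
    have hφc : ContinuousOn φ {x | R0 ≤ ‖x‖} := by
      have hn : ∀ p : ℝ, ContinuousOn (fun x : Euc N => ‖x‖ ^ p) {x | R0 ≤ ‖x‖} := by
        intro p
        refine continuous_norm.continuousOn.rpow_const fun x hx => Or.inl ?_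
        have : R0 ≤ ‖x‖ := hx
        linarith
      exact ((hn _).const_mul _).add ((continuousOn_const.add (hn _)).const_mul _)
    have hqc : ContinuousOn (fun x => u x / φ x) {x | R0 ≤ ‖x‖} :=
      hucont.continuousOn.div hφc fun x _ => (hφ0 x).ne'
    have hx1K : x1 ∈ K := ⟨hx1, by simp⟩
    obtain ⟨x0, hx0K, hx0m⟩ := hKc.exists_isMaxOn ⟨x1, hx1K⟩ (hqc.mono inter_subset_left)
    set T : ℝ := u x0 / φ x0 with hT
    have hT1 : 1 < T := by
      refine lt_of_lt_of_le ?_ (hx0m hx1K)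
      rw [one_lt_div (hφ0 _)]; exact hx1'
    have hux0 : u x0 = T * φ x0 := by rw [hT, div_mul_cancel₀ _ (hφ0 x0).ne']
    have hall : ∀ x : Euc N, R0 ≤ ‖x‖ → u x ≤ T * φ x := by
      intro x hx
      by_cases hxR : R2 ≤ ‖x‖
      · have := hR2 x hxR
        have h2 := hφε x
        nlinarith [hφ0 x]
      · have : x ∈ K := ⟨hx, by simp; left; linarith⟩
        have h3 := hx0m this
        exact (div_le_iff₀ (hφ0 x)).1 h3
    have hx0R : R0 < ‖x0‖ := by
      refine lt_of_le_of_ne hx0K.1 fun heq => ?_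
      have h1 : u x0 ≤ φ x0 := by
        have h2 := hMle x0 heq.symm
        have h3 : C * ‖x0‖ ^ (-s) = |M| + 1 := by
          rw [← heq, hC, mul_assoc, ← Real.rpow_add hR00]; simp
        have h4 : 0 ≤ ε * (1 + ‖x0‖ ^ (-t)) := by positivity
        simp only [hφ]; rw [h3]; linarith [le_abs_self M]
      have h2 := hφ0 x0
      nlinarith
    have hr0 : 0 < ‖x0‖ := by linarith
    have hx00 : x0 ≠ 0 := norm_pos_iff.mp hr0
    have hlm : IsLocalMax (fun x => u x + (-T) * φ x) x0 := by
      have : ∀ᶠ x in 𝓝 x0, R0 < ‖x‖ := continuous_norm.continuousAt.eventually (lt_mem_nhds hx0R)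
      filter_upwards [this] with x hx
      have := hall x hx.le
      linarith
    have hsec : ∀ i : Fin N, _ ≤ _ := fun i =>
      ((hasSec_of_contDiff hu.smooth x0 (EuclideanSpace.single i 1)).add
        ((((hasSec_pow s hx00 i).const_mul C).add
          (((HasSec.const (1:ℝ)).add (hasSec_pow t hx00 i)).const_mul ε)).const_mul (-T))).nonpos hlm
    have hsum := Finset.sum_nonpos fun i (_ : i ∈ Finset.univ) => hsec i
    rw [Finset.sum_add_distrib, ← Finset.mul_sum, Finset.sum_add_distrib, ← Finset.mul_sum,
      sum_sec_pow s hx00] at hsum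
    simp only [zero_add] at hsum
    rw [← Finset.mul_sum, sum_sec_pow t hx00] at hsum
    have heqn := hu.eqn x0
    rw [lap] at heqn
    have hup := hu.pos x0
    have hfp := hfn _ hup.le
    have hVx := hV x0 hx00
    have hVx2 := le_max_left (V x0) 0
    set r := ‖x0‖ with hr
    obtain ⟨⟨b1, b2⟩, -⟩ := hR0 r hx0R.le
    have b3 : lam * (V x0 * u x0 - f (u x0)) ≤ lam * (A * r ^ (-2 - α) * u x0) := by
      gcongr
      have : V x0 * u x0 ≤ A * r ^ (-2 - α) * u x0 := by gcongr; linarith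
      linarith
    have c1 : lam * (A * r ^ (-2 - α) * (C * r ^ (-s))) < C * (s * (N - 2 - s) * r ^ (-s - 2)) := by
      have : r ^ (-2 - α) * r ^ (-s) = r ^ (-α) * r ^ (-s - 2) := by
        rw [← Real.rpow_add hr0, ← Real.rpow_add hr0]; congr 1; ring
      calc lam * (A * r ^ (-2 - α) * (C * r ^ (-s)))
          = C * ((lam * A) * (r ^ (-2 - α) * r ^ (-s))) := by ring
        _ = C * ((lam * A * r ^ (-α)) * r ^ (-s - 2)) := by rw [this]; ring
        _ < _ := by gcongr
    have c2 : lam * (A * r ^ (-2 - α) * (ε * (1 + r ^ (-t))))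
        < ε * (t * (N - 2 - t) * r ^ (-t - 2)) := by
      have h1 : r ^ (-t) ≤ 1 :=
        Real.rpow_le_one_of_one_le_of_nonpos (by linarith) (by linarith)
      have : r ^ (-2 - α) = r ^ (-(α - t)) * r ^ (-t - 2) := by
        rw [← Real.rpow_add hr0]; congr 1; ring
      calc lam * (A * r ^ (-2 - α) * (ε * (1 + r ^ (-t))))
          ≤ lam * (A * r ^ (-2 - α) * (ε * (1 + 1))) := by gcongr
        _ = ε * ((2 * lam * A * r ^ (-(α - t))) * r ^ (-t - 2)) := by rw [this]; ring
        _ < _ := by gcongr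
    have c3 : lam * (A * r ^ (-2 - α) * u x0) <
        T * (C * (s * (N - 2 - s) * r ^ (-s - 2)) + ε * (t * (N - 2 - t) * r ^ (-t - 2))) := by
      rw [hux0]
      calc lam * (A * r ^ (-2 - α) * (T * φ x0))
          = T * (lam * (A * r ^ (-2 - α) * (C * r ^ (-s)))
            + lam * (A * r ^ (-2 - α) * (ε * (1 + r ^ (-t))))) := by simp only [hφ, ← hr]; ring
        _ < _ := by gcongr
    linarith
  intro x hx
  refine le_of_forall_pos_le_add fun ε hε => ?_
  have h1 := key (ε / 2) (by positivity) x hx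
  have h2 : ‖x‖ ^ (-t) ≤ 1 :=
    Real.rpow_le_one_of_one_le_of_nonpos (by linarith) (by linarith)
  nlinarith

lemma cont_sph {N : ℕ} {G : ℝ → sphere (0 : Euc N) 1 → ℝ} (hG : Continuous (Function.uncurry G)) :
    Continuous fun R => ∫ ω, G R ω ∂((volume : Measure (Euc N)).toSphere) := by
  have := continuous_parametric_integral_of_continuous
    (μ := (volume : Measure (Euc N)).toSphere) hG isCompact_univ
  simpa using this

lemma integrable_sph {N : ℕ} {g : sphere (0 : Euc N) 1 → ℝ} (hg : Continuous g) :
    Integrable g ((volume : Measure (Euc N)).toSphere) :=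
  hg.integrable_of_hasCompactSupport (HasCompactSupport.of_compactSpace g)

/-- Polar coordinates. -/
lemma integral_polar {N : ℕ} (hN : N ≠ 0) {k : Euc N → ℝ} (hk : Integrable k) :
    ∫ x, k x = ∫ r in Ioi (0:ℝ), sphereInt N k r := by
  have : Nonempty (Fin N) := ⟨⟨0, Nat.pos_of_ne_zero hN⟩⟩
  set μ : Measure (Euc N) := volume with hμ
  have hk2 : IntegrableOn k ({0}ᶜ : Set (Euc N)) μ := hk.integrableOn
  rw [integrableOn_iff_comap_subtypeVal (measurableSet_singleton _).compl] at hk2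
  set g : sphere (0 : Euc N) 1 × Ioi (0:ℝ) → ℝ := fun p => k (p.2.1 • p.1.1) with hg
  have hgc : (g ∘ homeomorphUnitSphereProd (Euc N)) = k ∘ Subtype.val := by
    funext x
    have := homeomorphUnitSphereProd_symm_apply_coe (Euc N) (homeomorphUnitSphereProd (Euc N) x)
    rw [Homeomorph.symm_apply_apply] at this
    simp only [hg, Function.comp]
    rw [← this]
  have hmp := μ.measurePreserving_homeomorphUnitSphereProd
  have hgi : Integrable g _ := (hmp.integrable_comp_emb (Homeomorph.measurableEmbedding _)).1
    (by rw [hgc]; exact hk2)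
  have hdim : Module.finrank ℝ (Euc N) = N := by simp
  calc ∫ x, k x ∂μ = ∫ x : ({(0)}ᶜ : Set (Euc N)), k x.1 ∂(μ.comap (↑)) := by
        rw [integral_subtype_comap (measurableSet_singleton _).compl k, restrict_compl_singleton]
    _ = ∫ p, g p ∂μ.toSphere.prod (.volumeIoiPow (Module.finrank ℝ (Euc N) - 1)) := by
        rw [← hmp.integral_comp (Homeomorph.measurableEmbedding _)]
        exact integral_congr_ae (Eventually.of_forall fun x => (congrFun hgc x).symm)
    _ = ∫ r, ∫ ω, g (ω, r) ∂μ.toSphere ∂(.volumeIoiPow (Module.finrank ℝ (Euc N) - 1)) :=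
        integral_prod_symm _ hgi
    _ = ∫ r in Ioi (0:ℝ), sphereInt N k r := by
      simp only [Measure.volumeIoiPow, ENNReal.ofReal]
      rw [integral_withDensity_eq_integral_smul (by fun_prop), hdim]
      rw [← integral_subtype_comap measurableSet_Ioi]
      refine integral_congr_ae (Eventually.of_forall fun r => ?_)
      have hr : (0:ℝ) < r.1 := r.2
      simp only [hg, sphereInt, NNReal.smul_def, Real.coe_toNNReal _ (pow_nonneg hr.le _)]
      rw [integral_mul_const, smul_eq_mul, mul_comm]


/-- Flux of `u ∇v` through the sphere of radius `R`. -/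
def flux (N : ℕ) (u v : Euc N → ℝ) (R : ℝ) : ℝ :=
  ∫ ω : sphere (0 : Euc N) 1, u (R • (ω : Euc N)) * fderiv ℝ v (R • (ω : Euc N)) ω * R ^ (N - 1)
    ∂((volume : Measure (Euc N)).toSphere)

/-- The divergence of `u ∇v`. -/
def divg (N : ℕ) (u v : Euc N → ℝ) (x : Euc N) : ℝ :=
  ∑ i : Fin N, fderiv ℝ (fun y => u y * fderiv ℝ v y (EuclideanSpace.single i 1)) x
    (EuclideanSpace.single i 1)

lemma cont_sphereInt {N : ℕ} {h : Euc N → ℝ} (hh : Continuous h) : Continuous (sphereInt N h) := by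
  unfold sphereInt
  apply cont_sph
  unfold Function.uncurry
  fun_prop

lemma cont_flux {N : ℕ} {u v : Euc N → ℝ} (hu : Continuous u) (hv : ContDiff ℝ 2 v) :
    Continuous (flux N u v) := by
  unfold flux
  apply cont_sph
  unfold Function.uncurry
  have h1 : Continuous (fderiv ℝ v) := hv.continuous_fderiv (by norm_num)
  have h2 : Continuous fun p : ℝ × sphere (0 : Euc N) 1 =>
      fderiv ℝ v (p.1 • (p.2 : Euc N)) (p.2 : Euc N) :=
    (h1.comp (by fun_prop)).clm_apply (by fun_prop)
  exact ((hu.comp (by fun_prop)).mul h2).mul (by fun_prop)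

lemma contDiff_field {N : ℕ} {u v : Euc N → ℝ} (hu : ContDiff ℝ 2 u) (hv : ContDiff ℝ 2 v)
    (e : Euc N) : ContDiff ℝ 1 (fun y => u y * fderiv ℝ v y e) :=
  (hu.of_le (by norm_num)).mul
    ((hv.fderiv_right (m := 1) (by norm_num)).clm_apply contDiff_const)

lemma cont_divg {N : ℕ} {u v : Euc N → ℝ} (hu : ContDiff ℝ 2 u) (hv : ContDiff ℝ 2 v) :
    Continuous (divg N u v) := by
  unfold divg
  refine continuous_finsetSum _ fun i _ => ?_
  exact ((contDiff_field hu hv _).continuous_fderiv (by norm_num)).clm_apply continuous_const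

lemma fderiv_norm_apply {N : ℕ} {x : Euc N} (hx : x ≠ 0) (e : Euc N) :
    fderiv ℝ (fun y : Euc N => ‖y‖) x e = ‖x‖⁻¹ * inner ℝ x e := by
  have hx0 : ‖x‖ ≠ 0 := norm_ne_zero_iff.mpr hx
  have hd : DifferentiableAt ℝ (fun y : Euc N => ‖y‖) x :=
    (contDiffAt_norm ℝ (n := 1) hx).differentiableAt (by norm_num)
  have h1 := (hd.hasFDerivAt.pow 2).unique (hasStrictFDerivAt_norm_sq x).hasFDerivAt
  have h2 := congrArg (fun L => L e) h1
  simp at h2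
  field_simp
  linarith

/-- Integration by parts against a radial cutoff. -/
lemma radial_ibp {N : ℕ} (hN : N ≠ 0) {u v : Euc N → ℝ} (hu : ContDiff ℝ 2 u)
    (hv : ContDiff ℝ 2 v) {η g : ℝ → ℝ} {a B : ℝ} (ha : 0 < a)
    (hg : Continuous g) (hη : ∀ r, HasDerivAt η (- g r) r) (hga : ∀ r, r ≤ a → g r = 0)
    (hηB : ∀ r, B ≤ r → η r = 0) :
    ∫ r in Ioi (0:ℝ), η r * sphereInt N (divg N u v) r = ∫ r in Ioi (0:ℝ), g r * flux N u v r := by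
  have hηc : ContDiff ℝ 1 η := by
    rw [contDiff_one_iff_deriv]
    refine ⟨fun r => (hη r).differentiableAt, ?_⟩
    have : deriv η = fun r => - g r := funext fun r => (hη r).deriv
    rw [this]; exact hg.neg
  set ζ : Euc N → ℝ := fun x => η ‖x‖ with hζ
  have hηa : ∀ r ∈ Iio a, η r = η 0 := by
    intro r hr
    refine IsOpen.is_const_of_deriv_eq_zero (s := Iio a) isOpen_Iio isPreconnected_Iio
      (fun r _ => (hη r).differentiableAt.differentiableWithinAt) (fun r hr => ?_) hr (by simpa using ha)
    rw [(hη r).deriv, hga r (le_of_lt hr)]; simp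
  have hζ0 : ζ =ᶠ[𝓝 0] fun _ => η 0 := by
    filter_upwards [ball_mem_nhds (0 : Euc N) ha] with x hx
    exact hηa _ (by simpa using hx)
  have hζc : ContDiff ℝ 1 ζ := by
    rw [contDiff_iff_contDiffAt]
    intro x
    by_cases hx : x = 0
    · subst hx; exact contDiffAt_const.congr_of_eventuallyEq hζ0
    · exact hηc.contDiffAt.comp x (contDiffAt_norm ℝ hx)
  have hζd : ∀ x e, fderiv ℝ ζ x e = - (g ‖x‖ * (‖x‖⁻¹ * inner ℝ x e)) := by
    intro x e
    by_cases hx : x = 0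
    · subst hx; rw [hζ0.fderiv_eq]; simp
    · have hd : DifferentiableAt ℝ (fun y : Euc N => ‖y‖) x :=
        (contDiffAt_norm ℝ (n := 1) hx).differentiableAt (by norm_num)
      have := (hη ‖x‖).comp_hasFDerivAt x hd.hasFDerivAt
      have h2 : fderiv ℝ ζ x = _ := this.fderiv
      rw [h2]
      simp [fderiv_norm_apply hx]
  have hζs : HasCompactSupport ζ := by
    refine HasCompactSupport.of_support_subset_isCompact (isCompact_closedBall (0 : Euc N) B) ?_
    intro x hx
    by_contra h
    apply hx
    apply hηB
    simp at h
    exact h.le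
  have hXc := fun i : Fin N => contDiff_field hu hv (EuclideanSpace.single i 1)
  have hζcont := hζc.continuous
  have hζd_cont : ∀ e, Continuous fun x => fderiv ℝ ζ x e := fun e =>
    (hζc.continuous_fderiv (by norm_num)).clm_apply continuous_const
  have hζds : ∀ e, HasCompactSupport fun x => fderiv ℝ ζ x e := fun e => hζs.fderiv_apply (𝕜 := ℝ) e
  have hXdc : ∀ i : Fin N, Continuous fun x =>
      fderiv ℝ (fun y => u y * fderiv ℝ v y (EuclideanSpace.single i 1)) x
        (EuclideanSpace.single i 1) := fun i =>
    ((hXc i).continuous_fderiv (by norm_num)).clm_apply continuous_const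
  have I1 : ∀ i : Fin N, Integrable fun x => fderiv ℝ ζ x (EuclideanSpace.single i 1) *
      (u x * fderiv ℝ v x (EuclideanSpace.single i 1)) := fun i =>
    ((hζd_cont _).mul (hXc i).continuous).integrable_of_hasCompactSupport ((hζds _).mul_right)
  have I2 : ∀ i : Fin N, Integrable fun x => ζ x *
      fderiv ℝ (fun y => u y * fderiv ℝ v y (EuclideanSpace.single i 1)) x
        (EuclideanSpace.single i 1) := fun i =>
    (hζcont.mul (hXdc i)).integrable_of_hasCompactSupport hζs.mul_right
  have ibp := fun i : Fin N => integral_mul_fderiv_eq_neg_fderiv_mul_of_integrable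
    (μ := (volume : Measure (Euc N))) (I1 i) (I2 i)
    ((hζcont.mul (hXc i).continuous).integrable_of_hasCompactSupport hζs.mul_right)
    (fun x _ => hζc.differentiable (by norm_num) x)
    (fun x _ => (hXc i).differentiable (by norm_num) x)
  have hsum : ∫ x, ζ x * divg N u v x = - ∫ x, ∑ i : Fin N, fderiv ℝ ζ x (EuclideanSpace.single i 1) *
      (u x * fderiv ℝ v x (EuclideanSpace.single i 1)) := by
    unfold divg
    simp_rw [Finset.mul_sum]
    rw [integral_finsetSum _ (fun i _ => I2 i), integral_finsetSum _ (fun i _ => I1 i),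
      ← Finset.sum_neg_distrib]
    exact Finset.sum_congr rfl fun i _ => ibp i
  have hpt : ∀ x, ∑ i : Fin N, fderiv ℝ ζ x (EuclideanSpace.single i 1) *
      (u x * fderiv ℝ v x (EuclideanSpace.single i 1)) =
      - (g ‖x‖ * (u x * fderiv ℝ v x (‖x‖⁻¹ • x))) := by
    intro x
    have hx : x = ∑ i : Fin N, x i • EuclideanSpace.single i (1:ℝ) := by
      ext j; simp [Finset.sum_apply, Pi.single_apply]
    have h3 : fderiv ℝ v x (‖x‖⁻¹ • x)
        = ∑ i : Fin N, ‖x‖⁻¹ * (x i * fderiv ℝ v x (EuclideanSpace.single i 1)) := by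
      conv_lhs => rw [map_smul]; arg 2; arg 2; rw [hx]
      rw [map_sum, smul_eq_mul, Finset.mul_sum]
      simp
    rw [h3, Finset.mul_sum, Finset.mul_sum, ← Finset.sum_neg_distrib]
    refine Finset.sum_congr rfl fun i _ => ?_
    rw [hζd, EuclideanSpace.inner_single_right]
    simp
    ring
  have hI3 : Integrable fun x => g ‖x‖ * (u x * fderiv ℝ v x (‖x‖⁻¹ • x)) := by
    have := (integrable_finsetSum Finset.univ (fun i _ => I1 i)).neg
    refine this.congr (Eventually.of_forall fun x => ?_)
    simp only [Pi.neg_apply]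
    rw [hpt]; simp
  have hI4 : Integrable fun x => ζ x * divg N u v x :=
    (hζcont.mul (cont_divg hu hv)).integrable_of_hasCompactSupport hζs.mul_right
  simp_rw [hpt, integral_neg, neg_neg] at hsum
  rw [integral_polar hN hI3, integral_polar hN hI4] at hsum
  have hn : ∀ r : ℝ, 0 < r → ∀ ω : sphere (0 : Euc N) 1, ‖r • (ω : Euc N)‖ = r := by
    intro r hr ω
    rw [norm_smul]; simp [abs_of_pos hr]
  calc _ = ∫ r in Ioi (0:ℝ), sphereInt N (fun x => ζ x * divg N u v x) r := by
        refine setIntegral_congr_fun measurableSet_Ioi fun r hr => ?_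
        simp only [sphereInt, hζ, hn r hr]
        rw [← integral_const_mul]
        simp only [mul_assoc]
    _ = _ := hsum
    _ = _ := by
        refine setIntegral_congr_fun measurableSet_Ioi fun r hr => ?_
        have hr' : r ≠ 0 := ne_of_gt hr
        simp only [sphereInt, flux, hn r hr]
        rw [← integral_const_mul]
        simp only [mul_assoc, smul_smul, inv_mul_cancel₀ hr', one_smul]

/-- The divergence theorem on balls. -/
lemma flux_eq {N : ℕ} (hN : N ≠ 0) {u v : Euc N → ℝ} (hu : ContDiff ℝ 2 u)
    (hv : ContDiff ℝ 2 v) {R : ℝ} (hR : 0 < R) :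
    flux N u v R = ∫ r in (0:ℝ)..R, sphereInt N (divg N u v) r := by
  set D := sphereInt N (divg N u v) with hD
  have hDc : Continuous D := cont_sphereInt (cont_divg hu hv)
  have hFc : Continuous (flux N u v) := cont_flux hu.continuous hv
  set P : ℝ → ℝ := fun R => ∫ r in (0:ℝ)..R, D r with hP
  have hPd : ∀ r, HasDerivAt P (D r) r := fun r => (hDc.integral_hasStrictDerivAt 0 r).hasDerivAt
  have hPc : Continuous P := continuous_iff_continuousAt.2 fun r => (hPd r).continuousAt
  have hae : ∀ᵐ r : ℝ, r ∈ Ioi (0:ℝ) → (P r - flux N u v r) = 0 := by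
    refine isOpen_Ioi.ae_eq_zero_of_integral_contDiff_smul_eq_zero
      ((hPc.sub hFc).locallyIntegrable.locallyIntegrableOn _) ?_
    intro g hgs hgcs hgU
    have hgc : Continuous g := hgs.continuous
    obtain ⟨a, ha, hga⟩ : ∃ a : ℝ, 0 < a ∧ ∀ r, r ≤ a → g r = 0 := by
      by_cases hne : (tsupport g).Nonempty
      · obtain ⟨m, hm, hmle⟩ := hgcs.isCompact.exists_isMinOn hne continuousOn_id
        have hm0 : 0 < m := hgU hm
        refine ⟨m / 2, by linarith, fun r hr => ?_⟩
        by_contra hgr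
        have : m ≤ r := hmle (subset_tsupport g hgr)
        linarith
      · refine ⟨1, one_pos, fun r _ => ?_⟩
        by_contra hgr
        exact hne ⟨r, subset_tsupport g hgr⟩
    obtain ⟨B, hB0, hB⟩ : ∃ B : ℝ, 0 < B ∧ ∀ r, B ≤ r → g r = 0 := by
      obtain ⟨M, hM⟩ := hgcs.isCompact.bddAbove
      refine ⟨max (M + 1) 1, by positivity, fun r hr => ?_⟩
      by_contra hgr
      have := hM (subset_tsupport g hgr)
      have := le_max_left (M + 1) 1
      linarith
    set η : ℝ → ℝ := fun r => (∫ t in (0:ℝ)..B, g t) - ∫ t in (0:ℝ)..r, g t with hη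
    have hηd : ∀ r, HasDerivAt η (- g r) r := fun r =>
      ((hgc.integral_hasStrictDerivAt 0 r).hasDerivAt).const_sub _
    have hηB : ∀ r, B ≤ r → η r = 0 := by
      intro r hr
      simp only [hη]
      rw [intervalIntegral.integral_interval_sub_left (hgc.intervalIntegrable _ _)
        (hgc.intervalIntegrable _ _)]
      rw [intervalIntegral.integral_symm, intervalIntegral.integral_zero_ae]
      · simp
      · refine Eventually.of_forall fun t ht => ?_
        rw [uIoc_of_le hr] at ht
        exact hB t ht.1.le
    have h1 := radial_ibp hN hu hv ha hgc hηd hga hηB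
    have h2 : ∀ k : ℝ → ℝ, ∫ r in Ioi (0:ℝ), g r * k r = ∫ r in (0:ℝ)..B, g r * k r := by
      intro k
      rw [intervalIntegral.integral_of_le hB0.le]
      refine setIntegral_eq_of_subset_of_forall_sdiff_eq_zero measurableSet_Ioi
        (fun r hr => hr.1) fun r hr => ?_
      rw [hB r, zero_mul]
      by_contra hlt
      exact hr.2 ⟨hr.1, le_of_lt (not_le.1 hlt)⟩
    have h3 : ∫ r in Ioi (0:ℝ), η r * D r = ∫ r in (0:ℝ)..B, η r * D r := by
      rw [intervalIntegral.integral_of_le hB0.le]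
      refine setIntegral_eq_of_subset_of_forall_sdiff_eq_zero measurableSet_Ioi
        (fun r hr => hr.1) fun r hr => ?_
      rw [hηB r, zero_mul]
      by_contra hlt
      exact hr.2 ⟨hr.1, le_of_lt (not_le.1 hlt)⟩
    have h4 := intervalIntegral.integral_mul_deriv_eq_deriv_mul (a := 0) (b := B)
      (u := η) (v := P) (u' := fun r => - g r) (v' := D) (fun r _ => hηd r) (fun r _ => hPd r)
      (hgc.neg.intervalIntegrable _ _) (hDc.intervalIntegrable _ _)
    have hP0 : P 0 = 0 := by simp [hP]
    rw [hηB B le_rfl, hP0] at h4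
    simp only [neg_mul, intervalIntegral.integral_neg] at h4
    have h5 : ∫ r in (0:ℝ)..B, g r * (P r - flux N u v r) = 0 := by
      simp_rw [mul_sub]
      have i1 : IntervalIntegrable (fun r => g r * P r) volume 0 B :=
        (hgc.mul hPc).intervalIntegrable _ _
      have i2 : IntervalIntegrable (fun r => g r * flux N u v r) volume 0 B :=
        (hgc.mul hFc).intervalIntegrable _ _
      rw [intervalIntegral.integral_sub i1 i2]
      rw [h2, h3, h4] at h1
      linarith
    rw [← h2] at h5
    rw [← h5, ← integral_indicator measurableSet_Ioi]
    congr 1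
    funext r
    by_cases hr : r ∈ Ioi (0:ℝ)
    · simp [indicator_of_mem hr]
    · rw [indicator_of_notMem hr, hga r (by simp at hr; linarith)]; simp
  have hEq : EqOn P (flux N u v) (Ioi 0) := by
    refine Measure.eqOn_open_of_ae_eq (μ := volume) ?_ isOpen_Ioi hPc.continuousOn hFc.continuousOn
    rw [EventuallyEq, ae_restrict_iff' measurableSet_Ioi]
    filter_upwards [hae] with r hr hr0
    have := hr hr0
    linarith
  exact (hEq hR).symm

/-- The pointwise product of the gradients of `u` and `v`. -/
def gp (N : ℕ) (u v : Euc N → ℝ) (x : Euc N) : ℝ :=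
  ∑ i : Fin N, fderiv ℝ u x (EuclideanSpace.single i 1) * fderiv ℝ v x (EuclideanSpace.single i 1)

lemma divg_eq {N : ℕ} {u v : Euc N → ℝ} (hu : ContDiff ℝ 2 u) (hv : ContDiff ℝ 2 v) (x : Euc N) :
    divg N u v x = gp N u v x + u x * lap N v x := by
  unfold divg gp lap
  rw [Finset.mul_sum, ← Finset.sum_add_distrib]
  refine Finset.sum_congr rfl fun i _ => ?_
  have h1 : ContDiff ℝ 1 (fun y => fderiv ℝ v y (EuclideanSpace.single i 1)) :=
    (hv.fderiv_right (m := 1) (by norm_num)).clm_apply contDiff_const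
  rw [fderiv_fun_mul (hu.differentiable (by norm_num) x) (h1.differentiable (by norm_num) x)]
  simp
  ring

lemma gp_self_nonneg {N : ℕ} (u : Euc N → ℝ) (x : Euc N) : 0 ≤ gp N u u x :=
  Finset.sum_nonneg fun _ _ => mul_self_nonneg _

lemma abs_gp_le {N : ℕ} (u v : Euc N → ℝ) (x : Euc N) :
    |gp N u v x| ≤ gp N u u x + gp N v v x := by
  unfold gp
  rw [← Finset.sum_add_distrib]
  refine (Finset.abs_sum_le_sum_abs _ _).trans (Finset.sum_le_sum fun i _ => ?_)
  rw [abs_le]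
  constructor <;> nlinarith [sq_nonneg (fderiv ℝ u x (EuclideanSpace.single i 1) +
    fderiv ℝ v x (EuclideanSpace.single i 1)), sq_nonneg (fderiv ℝ u x (EuclideanSpace.single i 1) -
    fderiv ℝ v x (EuclideanSpace.single i 1)), mul_self_nonneg (fderiv ℝ u x (EuclideanSpace.single i 1)),
    mul_self_nonneg (fderiv ℝ v x (EuclideanSpace.single i 1))]

lemma cont_gp {N : ℕ} {u v : Euc N → ℝ} (hu : ContDiff ℝ 2 u) (hv : ContDiff ℝ 2 v) :
    Continuous (gp N u v) := by
  unfold gp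
  refine continuous_finsetSum _ fun i _ => ?_
  exact ((hu.continuous_fderiv (by norm_num)).clm_apply continuous_const).mul
    ((hv.continuous_fderiv (by norm_num)).clm_apply continuous_const)

lemma fderiv_sq_le {N : ℕ} (v : Euc N → ℝ) (x : Euc N) (ω : sphere (0 : Euc N) 1) :
    (fderiv ℝ v x ω) ^ 2 ≤ gp N v v x := by
  have hx : (ω : Euc N) = ∑ i : Fin N, (ω : Euc N) i • EuclideanSpace.single i (1:ℝ) := by
    ext j; simp [Finset.sum_apply, Pi.single_apply]
  have h3 : fderiv ℝ v x ω
      = ∑ i : Fin N, (ω : Euc N) i * fderiv ℝ v x (EuclideanSpace.single i 1) := by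
    conv_lhs => rw [hx]
    rw [map_sum]
    simp
  have h4 : ∑ i : Fin N, ((ω : Euc N) i) ^ 2 = 1 := by
    have : ‖(ω : Euc N)‖ ^ 2 = 1 := by simp
    rw [EuclideanSpace.norm_sq_eq] at this
    simpa using this
  rw [h3]
  refine (Finset.sum_mul_sq_le_sq_mul_sq _ _ _).trans ?_
  rw [h4, one_mul]
  unfold gp
  simp [sq]

/-- Energy density of a solution. -/
def en (N : ℕ) (V : Euc N → ℝ) (f : ℝ → ℝ) (lam : ℝ) (u : Euc N → ℝ) (x : Euc N) : ℝ :=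
  gp N u u x + lam * (max (-V x) 0 * u x ^ 2) + lam * (f (u x) * u x)

/-- The positive potential density. -/
def pd (N : ℕ) (V : Euc N → ℝ) (u : Euc N → ℝ) (x : Euc N) : ℝ := max (V x) 0 * u x ^ 2

lemma gp_le_en {N : ℕ} {V : Euc N → ℝ} {f : ℝ → ℝ} {lam : ℝ} {u : Euc N → ℝ} (hlam : 0 < lam)
    (hfn : ∀ u : ℝ, 0 ≤ u → 0 ≤ f u) (hpos : ∀ x, 0 < u x) (x : Euc N) :
    gp N u u x ≤ en N V f lam u x := by
  unfold en
  have h1 := hfn _ (hpos x).le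
  have h2 := (hpos x).le
  have h3 : 0 ≤ max (-V x) 0 := le_max_right _ _
  have h4 : 0 ≤ lam * (max (-V x) 0 * u x ^ 2) := by positivity
  have h5 : 0 ≤ lam * (f (u x) * u x) := by positivity
  linarith

lemma divg_self {N : ℕ} {V : Euc N → ℝ} {f : ℝ → ℝ} {lam : ℝ} {u : Euc N → ℝ}
    (hu : IsSolution N V f lam u) (x : Euc N) :
    divg N u u x = en N V f lam u x - lam * pd N V u x := by
  have h1 := hu.eqn x
  have h2 : lap N u x = - (lam * (V x * u x - f (u x))) := by linarith
  rw [divg_eq hu.smooth hu.smooth, h2]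
  unfold en pd
  have h3 : V x = max (V x) 0 - max (-V x) 0 := by
    rcases le_total (V x) 0 with h | h
    · rw [max_eq_right h, max_eq_left (by linarith)]; ring
    · rw [max_eq_left h, max_eq_right (by linarith)]; ring
  generalize max (V x) 0 = a at *
  generalize max (-V x) 0 = b at *
  rw [h3]; ring

lemma abs_divg_le {N : ℕ} {V : Euc N → ℝ} {f : ℝ → ℝ} {lam : ℝ} {u v : Euc N → ℝ} (hlam : 0 < lam)
    (hfn : ∀ u : ℝ, 0 ≤ u → 0 ≤ f u) (hfm : StrictMonoOn (fun u : ℝ => f u / u) (Ioi 0))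
    (hu : IsSolution N V f lam u) (hv : IsSolution N V f lam v) (x : Euc N) :
    |divg N u v x| ≤ en N V f lam u x + en N V f lam v x + (lam * pd N V u x + lam * pd N V v x) := by
  have h1 := hv.eqn x
  have h2 : lap N v x = - (lam * (V x * v x - f (v x))) := by linarith
  rw [divg_eq hu.smooth hv.smooth, h2]
  unfold en pd
  have ha := hu.pos x
  have hb := hv.pos x
  have hfa := hfn _ ha.le
  have hfb := hfn _ hb.le
  have hg := abs_le.1 (abs_gp_le u v x)
  have h3 : V x = max (V x) 0 - max (-V x) 0 := by
    rcases le_total (V x) 0 with h | h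
    · rw [max_eq_right h, max_eq_left (by linarith)]; ring
    · rw [max_eq_left h, max_eq_right (by linarith)]; ring
  have h4 : 0 ≤ max (V x) 0 := le_max_right _ _
  have h5 : 0 ≤ max (-V x) 0 := le_max_right _ _
  have h6 : f (v x) * u x ≤ f (u x) * u x + f (v x) * v x := by
    rcases le_total (u x) (v x) with h | h
    · have : f (v x) * u x ≤ f (v x) * v x := by gcongr
      have : 0 ≤ f (u x) * u x := by positivity
      linarith
    · have h7 : f (v x) / v x ≤ f (u x) / u x := hfm.monotoneOn hb ha h
      rw [div_le_div_iff₀ hb ha] at h7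
      have h8 : f (u x) * v x ≤ f (u x) * u x := by gcongr
      have : 0 ≤ f (v x) * v x := by positivity
      linarith
  generalize max (V x) 0 = p at *
  generalize max (-V x) 0 = q at *
  rw [h3]
  generalize u x = a at *
  generalize v x = b at *
  have h7 : a * b ≤ a ^ 2 + b ^ 2 := by nlinarith [sq_nonneg (a - b)]
  have hab : 0 < a * b := by positivity
  have p1 : lam * (p * (a * b)) ≤ lam * (p * (a ^ 2 + b ^ 2)) := by gcongr
  have q1 : lam * (q * (a * b)) ≤ lam * (q * (a ^ 2 + b ^ 2)) := by gcongr
  have f1 : lam * (f b * a) ≤ lam * (f a * a + f b * b) := by gcongr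
  have p0 : 0 ≤ lam * (p * (a * b)) := by positivity
  have q0 : 0 ≤ lam * (q * (a * b)) := by positivity
  have f0 : 0 ≤ lam * (f b * a) := by positivity
  have e1 : a * -(lam * ((p - q) * b - f b))
      = -(lam * (p * (a * b))) + lam * (q * (a * b)) + lam * (f b * a) := by ring
  rw [e1, abs_le]
  constructor <;> linarith

lemma cont_en {N : ℕ} {V : Euc N → ℝ} {f : ℝ → ℝ} {lam : ℝ} {u : Euc N → ℝ}
    (hV : Continuous V) (hf : Continuous f) (hu : ContDiff ℝ 2 u) : Continuous (en N V f lam u) := by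
  unfold en
  have h1 := cont_gp hu hu
  have h2 := hu.continuous
  fun_prop

lemma cont_pd {N : ℕ} {V : Euc N → ℝ} {u : Euc N → ℝ}
    (hV : Continuous V) (hu : Continuous u) : Continuous (pd N V u) := by
  unfold pd
  fun_prop

lemma sphereInt_mono {N : ℕ} {g h : Euc N → ℝ} (hg : Continuous g) (hh : Continuous h)
    {R : ℝ} (hR : 0 ≤ R) (hle : ∀ ω : sphere (0 : Euc N) 1, g (R • (ω : Euc N)) ≤ h (R • (ω : Euc N))) :
    sphereInt N g R ≤ sphereInt N h R := by
  unfold sphereInt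
  refine integral_mono (integrable_sph (by fun_prop)) (integrable_sph (by fun_prop)) fun ω => ?_
  have := hle ω
  simp only
  gcongr

lemma sphereInt_add {N : ℕ} {g h : Euc N → ℝ} (hg : Continuous g) (hh : Continuous h) (R : ℝ) :
    sphereInt N (fun x => g x + h x) R = sphereInt N g R + sphereInt N h R := by
  unfold sphereInt
  rw [← integral_add (integrable_sph (by fun_prop)) (integrable_sph (by fun_prop))]
  simp only [add_mul]

lemma sphereInt_const_mul {N : ℕ} (c : ℝ) (g : Euc N → ℝ) (R : ℝ) :
    sphereInt N (fun x => c * g x) R = c * sphereInt N g R := by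
  unfold sphereInt
  rw [← integral_const_mul]
  simp only [mul_assoc]

lemma sphereInt_nonneg {N : ℕ} {g : Euc N → ℝ} (hg : ∀ x, 0 ≤ g x) {R : ℝ} (hR : 0 ≤ R) :
    0 ≤ sphereInt N g R := by
  unfold sphereInt
  exact integral_nonneg fun ω => mul_nonneg (hg _) (pow_nonneg hR _)

lemma abs_sphereInt_le {N : ℕ} {g : Euc N → ℝ} {R : ℝ} (hR : 0 ≤ R) :
    |sphereInt N g R| ≤ sphereInt N (fun x => |g x|) R := by
  unfold sphereInt
  refine (abs_integral_le_integral_abs).trans_eq ?_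
  simp only [abs_mul, abs_of_nonneg (pow_nonneg hR _)]

lemma sphereInt_const_le {N : ℕ} {g : Euc N → ℝ} (hg : Continuous g) {R c : ℝ} (hR : 0 ≤ R)
    (h : ∀ ω : sphere (0 : Euc N) 1, g (R • (ω : Euc N)) ≤ c) :
    sphereInt N g R ≤ ((volume : Measure (Euc N)).toSphere.real univ) * (c * R ^ (N - 1)) := by
  refine (sphereInt_mono hg (continuous_const (y := c)) hR h).trans_eq ?_
  unfold sphereInt
  rw [integral_const, smul_eq_mul]

lemma norm_smul_sphere {N : ℕ} {r : ℝ} (hr : 0 ≤ r) (ω : sphere (0 : Euc N) 1) :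
    ‖r • (ω : Euc N)‖ = r := by
  rw [norm_smul]; simp [abs_of_nonneg hr]

lemma sq_bounds {N : ℕ} (hN : 3 ≤ N) {V : Euc N → ℝ} {f : ℝ → ℝ} {lam : ℝ}
    (hdec : CondVDecay N V) (hVc : Continuous V) (hfn : ∀ u : ℝ, 0 ≤ u → 0 ≤ f u) (hlam : 0 < lam)
    {u : Euc N → ℝ} (hu : IsSolution N V f lam u) :
    ∃ K R0 α : ℝ, 0 < K ∧ 1 ≤ R0 ∧ 0 < α ∧ ∀ R, R0 ≤ R →
      sphereInt N (fun x => u x ^ 2) R ≤ K * R ∧ sphereInt N (pd N V u) R ≤ K * R ^ (-1 - α) := by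
  obtain ⟨C, R0, hC, hR0, hb⟩ := decay_bound hN hdec hfn hlam hu
  obtain ⟨A, α, hA, hα, hV⟩ := hdec
  have huc := hu.smooth.continuous
  set σ := ((volume : Measure (Euc N)).toSphere.real univ) with hσ
  have hσ0 : 0 ≤ σ := measureReal_nonneg
  have hsq : ∀ R, R0 ≤ R → ∀ ω : sphere (0 : Euc N) 1,
      u (R • (ω : Euc N)) ^ 2 ≤ C ^ 2 * R ^ (2 - (N:ℝ)) := by
    intro R hR ω
    have hRp : 0 < R := by linarith
    have h1 := hb (R • (ω : Euc N)) (by rw [norm_smul_sphere hRp.le]; exact hR)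
    rw [norm_smul_sphere hRp.le] at h1
    have h2 : (R ^ (-(((N:ℝ) - 2) / 2))) ^ 2 = R ^ (2 - (N:ℝ)) := by
      rw [← Real.rpow_natCast, ← Real.rpow_mul hRp.le]; congr 1; push_cast; ring
    rw [← h2, ← mul_pow]
    exact pow_le_pow_left₀ (hu.pos _).le h1 2
  have hpw : ∀ R : ℝ, 0 < R → R ^ (2 - (N:ℝ)) * R ^ (N - 1) = R := by
    intro R hR
    rw [← Real.rpow_natCast, ← Real.rpow_add hR, Nat.cast_sub (by omega)]
    rw [show (2 - (N:ℝ) + ((N:ℝ) - (1:ℕ))) = 1 by push_cast; ring, Real.rpow_one]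
  refine ⟨σ * C ^ 2 * (1 + A) + 1, R0, α, by positivity, hR0, hα, fun R hR => ?_⟩
  have hRp : 0 < R := by linarith
  constructor
  · refine (sphereInt_const_le (by fun_prop) hRp.le (hsq R hR)).trans ?_
    rw [mul_assoc (C ^ 2), hpw R hRp]
    have : 0 ≤ σ * C ^ 2 * A * R := by positivity
    nlinarith
  · have hp : ∀ ω : sphere (0 : Euc N) 1, pd N V u (R • (ω : Euc N))
        ≤ A * R ^ (-2 - α) * (C ^ 2 * R ^ (2 - (N:ℝ))) := by
      intro ω
      have h1 := hsq R hR ω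
      have hn := norm_smul_sphere hRp.le ω
      have h2 := hV (R • (ω : Euc N)) (by rw [← norm_pos_iff, hn]; exact hRp)
      rw [hn] at h2
      unfold pd
      gcongr
    refine (sphereInt_const_le (cont_pd hVc huc) hRp.le hp).trans ?_
    have e1 : R ^ (-2 - α) * R = R ^ (-1 - α) := by
      nth_rw 2 [← Real.rpow_one R]
      rw [← Real.rpow_add hRp]; congr 1; ring
    calc σ * (A * R ^ (-2 - α) * (C ^ 2 * R ^ (2 - (N:ℝ))) * R ^ (N - 1))
        = σ * C ^ 2 * A * (R ^ (-2 - α) * (R ^ (2 - (N:ℝ)) * R ^ (N - 1))) := by ring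
      _ = σ * C ^ 2 * A * R ^ (-1 - α) := by rw [hpw R hRp, e1]
      _ ≤ _ := by
        gcongr
        have : 0 ≤ σ * C ^ 2 := by positivity
        nlinarith

lemma pd_integrable {N : ℕ} (hN : 3 ≤ N) {V : Euc N → ℝ} {f : ℝ → ℝ} {lam : ℝ}
    (hdec : CondVDecay N V) (hVc : Continuous V) (hfn : ∀ u : ℝ, 0 ≤ u → 0 ≤ f u) (hlam : 0 < lam)
    {u : Euc N → ℝ} (hu : IsSolution N V f lam u) :
    IntegrableOn (sphereInt N (pd N V u)) (Ioi 0) := by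
  obtain ⟨K, R0, α, hK, hR0, hα, hb⟩ := sq_bounds hN hdec hVc hfn hlam hu
  have hc : Continuous (sphereInt N (pd N V u)) := cont_sphereInt (cont_pd hVc hu.smooth.continuous)
  have hR : 0 < R0 := by linarith
  rw [← Ioc_union_Ioi_eq_Ioi hR.le]
  refine IntegrableOn.union ((hc.integrableOn_Icc).mono_set Ioc_subset_Icc_self) ?_
  have h1 : IntegrableOn (fun r : ℝ => K * r ^ (-1 - α)) (Ioi R0) :=
    ((integrableOn_Ioi_rpow_iff hR).2 (by linarith)).const_mul K
  refine Integrable.mono' h1 hc.aestronglyMeasurable ?_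
  refine (ae_restrict_iff' measurableSet_Ioi).2 (Eventually.of_forall fun r hr => ?_)
  have hr' : R0 < r := hr
  rw [Real.norm_of_nonneg (sphereInt_nonneg (fun x => ?_) (by linarith))]
  · exact (hb r hr'.le).2
  · exact mul_nonneg (le_max_right _ _) (sq_nonneg _)

lemma mean_deriv {N : ℕ} {u : Euc N → ℝ} (hu : ContDiff ℝ 2 u) (R : ℝ) :
    HasDerivAt (fun R : ℝ => ∫ ω : sphere (0 : Euc N) 1, u (R • (ω : Euc N)) ^ 2
        ∂((volume : Measure (Euc N)).toSphere))
      (∫ ω : sphere (0 : Euc N) 1, 2 * (u (R • (ω : Euc N)) * fderiv ℝ u (R • (ω : Euc N)) ω)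
        ∂((volume : Measure (Euc N)).toSphere)) R := by
  have huc := hu.continuous
  have h1 : Continuous (fderiv ℝ u) := hu.continuous_fderiv (by norm_num)
  set F' : ℝ → sphere (0 : Euc N) 1 → ℝ :=
    fun R ω => 2 * (u (R • (ω : Euc N)) * fderiv ℝ u (R • (ω : Euc N)) ω) with hF'
  have h2 : Continuous fun p : ℝ × sphere (0 : Euc N) 1 => F' p.1 p.2 := by
    have : Continuous fun p : ℝ × sphere (0 : Euc N) 1 =>
        fderiv ℝ u (p.1 • (p.2 : Euc N)) (p.2 : Euc N) :=
      (h1.comp (by fun_prop)).clm_apply (by fun_prop)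
    exact continuous_const.mul ((huc.comp (by fun_prop)).mul this)
  obtain ⟨M, hM⟩ := ((isCompact_Icc (a := R - 1) (b := R + 1)).prod
    (isCompact_univ (X := sphere (0 : Euc N) 1))).bddAbove_image h2.norm.continuousOn
  have hs : Icc (R - 1) (R + 1) ∈ 𝓝 R := Icc_mem_nhds (by linarith) (by linarith)
  refine (hasDerivAt_integral_of_dominated_loc_of_deriv_le (F' := F') (bound := fun _ => M) hs
    (Eventually.of_forall fun r => ?_) ?_ ?_ ?_ (integrable_const _) ?_).2
  · exact (by fun_prop : Continuous fun ω : sphere (0 : Euc N) 1 =>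
      u (r • (ω : Euc N)) ^ 2).aestronglyMeasurable
  · exact integrable_sph (by fun_prop)
  · exact (h2.comp (by fun_prop : Continuous fun ω : sphere (0 : Euc N) 1 =>
      (R, ω))).aestronglyMeasurable
  · exact Eventually.of_forall fun ω r hr => hM ⟨(r, ω), ⟨hr, mem_univ _⟩, rfl⟩
  · refine Eventually.of_forall fun ω r _ => ?_
    have hl : HasDerivAt (fun r : ℝ => r • (ω : Euc N)) (ω : Euc N) r := by
      simpa using (hasDerivAt_id r).smul_const (ω : Euc N)
    have h3 := (hu.differentiable (by norm_num) (r • (ω : Euc N))).hasFDerivAt.comp_hasDerivAt r hl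
    refine (h3.pow 2).congr_deriv ?_
    simp [hF']
    ring

lemma en_integrable {N : ℕ} (hN : 3 ≤ N) {V : Euc N → ℝ} {f : ℝ → ℝ} {lam : ℝ}
    (hdec : CondVDecay N V) (hVc : Continuous V) (hfc : Continuous f)
    (hfn : ∀ u : ℝ, 0 ≤ u → 0 ≤ f u) (hlam : 0 < lam)
    {u : Euc N → ℝ} (hu : IsSolution N V f lam u) :
    IntegrableOn (sphereInt N (en N V f lam u)) (Ioi 0) := by
  have hWi := pd_integrable hN hdec hVc hfn hlam hu
  obtain ⟨K, R0, α, hK, hR0, hα, hb⟩ := sq_bounds hN hdec hVc hfn hlam hu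
  have hpdc := cont_pd hVc hu.smooth.continuous
  have hec0 : Continuous (en N V f lam u) := cont_en hVc hfc hu.smooth
  set W := sphereInt N (pd N V u) with hW
  set e := sphereInt N (en N V f lam u) with he
  have hWc : Continuous W := cont_sphereInt hpdc
  have hec : Continuous e := cont_sphereInt hec0
  have he0 : ∀ r, 0 ≤ r → 0 ≤ e r := fun r hr =>
    sphereInt_nonneg (fun x => (gp_self_nonneg u x).trans (gp_le_en hlam hfn hu.pos x)) hr
  have hW0 : ∀ r, 0 ≤ r → 0 ≤ W r := fun r hr =>
    sphereInt_nonneg (fun x => mul_nonneg (le_max_right _ _) (sq_nonneg _)) hr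
  by_contra hcon
  have hbig : ∀ I : ℝ, ∃ᶠ R in atTop, I < ∫ r in (0:ℝ)..R, e r := by
    intro I hI
    apply hcon
    refine integrableOn_Ioi_of_intervalIntegral_norm_bounded (l := atTop) (b := fun R : ℝ => R) I 0
      (fun R => (hec.integrableOn_Icc).mono_set Ioc_subset_Icc_self) tendsto_id ?_
    filter_upwards [hI, eventually_ge_atTop (0:ℝ)] with R hR hR0
    have : ∫ x in (0:ℝ)..R, ‖e x‖ = ∫ x in (0:ℝ)..R, e x := by
      refine intervalIntegral.integral_congr fun x hx => ?_
      rw [uIcc_of_le hR0] at hx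
      exact Real.norm_of_nonneg (he0 x hx.1)
    rw [this]; exact not_lt.1 hR
  set Kw := lam * ∫ r in Ioi (0:ℝ), W r with hKw
  obtain ⟨R1, hR1, hR1pos⟩ := ((hbig (Kw + 1)).and_eventually (eventually_ge_atTop (1:ℝ))).exists
  have hflux : ∀ R, R1 ≤ R → 1 ≤ flux N u u R := by
    intro R hR
    have hRp : 0 < R := by linarith
    rw [flux_eq (by omega) hu.smooth hu.smooth hRp]
    have h1 : ∀ r, sphereInt N (divg N u u) r = e r + (-lam) * W r := by
      intro r
      rw [he, hW, ← sphereInt_const_mul, ← sphereInt_add hec0 (by fun_prop)]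
      congr 1
      funext x
      rw [divg_self hu]; ring
    simp_rw [h1]
    have i1 : IntervalIntegrable (fun r => (-lam) * W r) volume 0 R :=
      (continuous_const.mul hWc).intervalIntegrable _ _
    rw [intervalIntegral.integral_add (hec.intervalIntegrable _ _) i1,
      intervalIntegral.integral_const_mul]
    have h2 : ∫ r in (0:ℝ)..R1, e r ≤ ∫ r in (0:ℝ)..R, e r := by
      rw [← intervalIntegral.integral_add_adjacent_intervals (hec.intervalIntegrable 0 R1)
        (hec.intervalIntegrable R1 R)]
      have : 0 ≤ ∫ r in R1..R, e r := intervalIntegral.integral_nonneg hR fun r hr =>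
        he0 r (by linarith [hr.1])
      linarith
    have h3 : ∫ r in (0:ℝ)..R, W r ≤ ∫ r in Ioi (0:ℝ), W r := by
      rw [intervalIntegral.integral_of_le hRp.le]
      refine setIntegral_mono_set hWi ?_ (Eventually.of_forall fun r hr => hr.1)
      exact (ae_restrict_iff' measurableSet_Ioi).2 (Eventually.of_forall fun r hr => hW0 r (le_of_lt hr))
    have h4 : lam * ∫ r in (0:ℝ)..R, W r ≤ Kw := by rw [hKw]; gcongr
    linarith
  set m : ℝ → ℝ := fun R : ℝ => ∫ ω : sphere (0 : Euc N) 1, u (R • (ω : Euc N)) ^ 2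
        ∂((volume : Measure (Euc N)).toSphere) with hm
  have hmd := mean_deriv hu.smooth
  have hmpos : ∀ R, R1 ≤ R → 0 < deriv m R := by
    intro R hR
    have hRp : 0 < R := by linarith
    rw [(hmd R).deriv, integral_const_mul]
    have h1 := hflux R hR
    unfold flux at h1
    rw [integral_mul_const] at h1
    have h2 : 0 < R ^ (N - 1) := by positivity
    have h3 := pos_of_mul_pos_left (a := ∫ ω : sphere (0 : Euc N) 1,
      u (R • (ω : Euc N)) * fderiv ℝ u (R • (ω : Euc N)) ω
        ∂((volume : Measure (Euc N)).toSphere)) (lt_of_lt_of_le one_pos h1) h2.le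
    linarith
  have hmmono : StrictMonoOn m (Ici R1) := by
    refine strictMonoOn_of_deriv_pos (convex_Ici R1)
      (fun r _ => (hmd r).continuousAt.continuousWithinAt) fun r hr => ?_
    rw [interior_Ici] at hr
    exact hmpos r (le_of_lt hr)
  have hm0 : 0 ≤ m R1 := integral_nonneg fun ω => sq_nonneg _
  have hm1 : m R1 < m (R1 + 1) := hmmono (by simp) (by simp) (by linarith)
  have hmle : ∀ R, R0 ≤ R → m R ≤ K * R⁻¹ := by
    intro R hR
    have h1 := (hb R hR).1
    have hR1' : 1 ≤ R := by linarith
    unfold sphereInt at h1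
    rw [integral_mul_const] at h1
    change m R * R ^ (N - 1) ≤ K * R at h1
    have h2 : R ^ 2 ≤ R ^ (N - 1) := pow_le_pow_right₀ hR1' (by omega)
    have h3 : 0 ≤ m R := integral_nonneg fun ω => sq_nonneg _
    have h4 : m R * R ^ 2 ≤ K * R := le_trans (by gcongr) h1
    rw [← div_eq_mul_inv, le_div_iff₀ (by linarith)]
    nlinarith
  have hlim : Tendsto (fun R : ℝ => K * R⁻¹) atTop (𝓝 0) := by
    simpa using tendsto_inv_atTop_zero.const_mul K
  have : m (R1 + 1) ≤ 0 := by
    refine ge_of_tendsto hlim ?_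
    filter_upwards [eventually_ge_atTop R0, eventually_ge_atTop (R1 + 1)] with R a b
    exact (hmmono.monotoneOn (by simp) (by simp; linarith) b).trans (hmle R a)
  linarith

lemma flux_tendsto {N : ℕ} (hN : 3 ≤ N) {V : Euc N → ℝ} {f : ℝ → ℝ} {lam : ℝ}
    (hdec : CondVDecay N V) (hVc : Continuous V) (hfc : Continuous f)
    (hfn : ∀ u : ℝ, 0 ≤ u → 0 ≤ f u) (hfm : StrictMonoOn (fun u : ℝ => f u / u) (Ioi 0))
    (hlam : 0 < lam)
    {u v : Euc N → ℝ} (hu : IsSolution N V f lam u) (hv : IsSolution N V f lam v) :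
    Tendsto (flux N u v) atTop (𝓝 0) := by
  have hpu := cont_pd hVc hu.smooth.continuous
  have hpv := cont_pd hVc hv.smooth.continuous
  have heu : Continuous (en N V f lam u) := cont_en hVc hfc hu.smooth
  have hev : Continuous (en N V f lam v) := cont_en hVc hfc hv.smooth
  have hd := cont_divg hu.smooth hv.smooth
  have hDi : IntegrableOn (sphereInt N (divg N u v)) (Ioi 0) := by
    have h1 := ((en_integrable hN hdec hVc hfc hfn hlam hu).add
      (en_integrable hN hdec hVc hfc hfn hlam hv)).add
      (((pd_integrable hN hdec hVc hfn hlam hu).const_mul lam).add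
        ((pd_integrable hN hdec hVc hfn hlam hv).const_mul lam))
    refine Integrable.mono' h1 (cont_sphereInt hd).aestronglyMeasurable ?_
    refine (ae_restrict_iff' measurableSet_Ioi).2 (Eventually.of_forall fun r hr => ?_)
    have hr' : (0:ℝ) ≤ r := le_of_lt hr
    refine (abs_sphereInt_le hr').trans ?_
    refine (sphereInt_mono (h := fun x => en N V f lam u x + en N V f lam v x +
      (lam * pd N V u x + lam * pd N V v x)) hd.abs (by fun_prop) hr'
      (fun ω => abs_divg_le hlam hfn hfm hu hv _)).trans_eq ?_
    rw [sphereInt_add (by fun_prop) (by fun_prop), sphereInt_add heu hev,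
      sphereInt_add (by fun_prop) (by fun_prop), sphereInt_const_mul, sphereInt_const_mul]
    rfl
  have hei := en_integrable hN hdec hVc hfc hfn hlam hv
  obtain ⟨K, R0, α, hK, hR0, hα, hb⟩ := sq_bounds hN hdec hVc hfn hlam hu
  set L := ∫ r in Ioi (0:ℝ), sphereInt N (divg N u v) r with hL
  have hlim : Tendsto (flux N u v) atTop (𝓝 L) := by
    refine (intervalIntegral_tendsto_integral_Ioi 0 hDi tendsto_id).congr' ?_
    filter_upwards [eventually_gt_atTop (0:ℝ)] with R hR
    exact (flux_eq (by omega) hu.smooth hv.smooth hR).symm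
  suffices hL0 : L = 0 by rwa [hL0] at hlim
  by_contra hne
  set l := |L| / 2 with hl
  have hl0 : 0 < l := by have := abs_pos.2 hne; positivity
  have hlow : ∀ᶠ R in atTop, l < |flux N u v R| :=
    hlim.abs.eventually (lt_mem_nhds (by rw [hl]; have := abs_pos.2 hne; linarith))
  set δ := l / (2 * K) with hδ
  have hδ0 : 0 < δ := by positivity
  obtain ⟨a, ha⟩ := (hlow.and (eventually_ge_atTop R0)).exists_forall_of_atTop
  have huc := hu.smooth.continuous
  refine not_integrableOn_Ioi_inv (a := max a 1) ?_
  have hei2 : IntegrableOn (fun r => (2 * δ * l)⁻¹ * sphereInt N (en N V f lam v) r)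
      (Ioi (max a 1)) :=
    (hei.mono_set (Ioi_subset_Ioi (by positivity))).const_mul _
  refine Integrable.mono' hei2 (by fun_prop) ?_
  refine (ae_restrict_iff' measurableSet_Ioi).2 (Eventually.of_forall fun r hr => ?_)
  have hra : a ≤ r := (le_max_left a 1).trans (le_of_lt hr)
  have hr1 : 0 < r := lt_of_lt_of_le one_pos ((le_max_right a 1).trans (le_of_lt hr))
  obtain ⟨h1, h2⟩ := ha r hra
  have h3 := (hb r h2).1
  rw [Real.norm_of_nonneg (by positivity)]
  have h4 : |flux N u v r| ≤
      sphereInt N (fun x => (δ / r) * u x ^ 2 + (r / (4 * δ)) * en N V f lam v x) r := by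
    unfold flux sphereInt
    refine abs_integral_le_integral_abs.trans ?_
    have hfd : Continuous (fderiv ℝ v) := hv.smooth.continuous_fderiv (by norm_num)
    have hc1 : Continuous fun ω : sphere (0 : Euc N) 1 =>
        fderiv ℝ v (r • (ω : Euc N)) (ω : Euc N) :=
      (hfd.comp (by fun_prop)).clm_apply (by fun_prop)
    refine integral_mono (integrable_sph ?_) (integrable_sph (by fun_prop)) fun ω => ?_
    · exact (((huc.comp (by fun_prop)).mul hc1).mul continuous_const).abs
    · simp only
      rw [abs_mul, abs_of_nonneg (pow_nonneg hr1.le _)]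
      gcongr
      have g1 := (fderiv_sq_le v (r • (ω : Euc N)) ω).trans (gp_le_en (V := V) hlam hfn hv.pos _)
      generalize fderiv ℝ v (r • (ω : Euc N)) (ω : Euc N) = y at *
      generalize u (r • (ω : Euc N)) = z at *
      have g2 : |z * y| ≤ δ / r * z ^ 2 + r / (4 * δ) * y ^ 2 := by
        rw [abs_mul, ← sq_abs z, ← sq_abs y]
        generalize |z| = z
        generalize |y| = y
        have : δ / r * z ^ 2 + r / (4 * δ) * y ^ 2 - z * y
            = (2 * δ * z - r * y) ^ 2 / (4 * δ * r) := by field_simp; ring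
        have h0 : 0 ≤ (2 * δ * z - r * y) ^ 2 / (4 * δ * r) := by positivity
        linarith
      refine g2.trans ?_
      gcongr
  rw [sphereInt_add (by fun_prop) (by fun_prop), sphereInt_const_mul, sphereInt_const_mul] at h4
  have h5 : δ / r * sphereInt N (fun x => u x ^ 2) r ≤ l / 2 := by
    calc δ / r * sphereInt N (fun x => u x ^ 2) r ≤ δ / r * (K * r) := by gcongr
      _ = l / 2 := by rw [hδ]; field_simp
  have h6 : l / 2 ≤ r / (4 * δ) * sphereInt N (en N V f lam v) r := by linarith
  generalize sphereInt N (en N V f lam v) r = E at *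
  have h7 : l / 2 * (2 / (r * l)) ≤ r / (4 * δ) * E * (2 / (r * l)) := by gcongr
  have e1 : l / 2 * (2 / (r * l)) = r⁻¹ := by field_simp
  have e2 : r / (4 * δ) * E * (2 / (r * l)) = (2 * δ * l)⁻¹ * E := by field_simp; ring
  rw [e1, e2] at h7
  exact h7


/-- for two solutions `u`, `v` of `(P_λ)`, the boundary flux
`∫_{∂B_R} u ∂v/∂ν dσ` tends to zero as `R → ∞`. -/
theorem stmt12 (N : ℕ) (hN : 3 ≤ N) (V V₁ V₂ : Euc N → ℝ)
    (hV : CondV N V V₁ V₂) (hdec : CondVDecay N V)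
    (f : ℝ → ℝ) (hf : CondF N V f)
    (lam : ℝ) (hlam : 0 < lam)
    (u v : Euc N → ℝ) (hu : IsSolution N V f lam u) (hv : IsSolution N V f lam v) :
    Tendsto (fun R : ℝ =>
        sphereInt N (fun x => u x * (inner ℝ (gradient v x) (‖x‖⁻¹ • x) : ℝ)) R)
      atTop (𝓝 0) := by
  obtain ⟨⟨Ch, β, hβ, -, hH⟩, -⟩ := hV
  have hVc : Continuous V := hH.continuous hβ
  obtain ⟨hf1, hfn, -, -, -, hfm, -⟩ := hf
  have h := flux_tendsto hN hdec hVc hf1.continuous hfn hfm hlam hu hv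
  refine h.congr' ?_
  filter_upwards [eventually_gt_atTop (0:ℝ)] with R hR
  unfold flux sphereInt
  refine integral_congr_ae (Eventually.of_forall fun ω => ?_)
  simp only
  rw [norm_smul_sphere hR.le, smul_smul, inv_mul_cancel₀ hR.ne', one_smul]
  congr 2
  rw [gradient, InnerProductSpace.toDual_symm_apply]

end
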